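/- Let B be a finite linear combination of functions of the form A·h_{I×J} with A a d×d matrix and I×J a dyadic rectangle, and let f be a finite linear combination of functions of the form v·h_{K×L} with v ∈ ℂ^d. Then the iterated commutator satisfies [[M_B,Ш₁],Ш₂] f = Σ_{I,J,K,L∈𝒟} B̂(I×J) f̂(K×L) ([M_{h_I},Ш](h_K)) ⊗ ([M_{h_J},Ш](h_L)), and every summand with I ⊄ K (i.e. not I ⊆ K) or J ⊄ L vanishes, so the sum may be restricted to I ⊆ K and J ⊆ L. -/

import Mathlib

/-!
The identity holds at every point. On the functions that occur, `Ш` is linear: bounded integrable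
functions that are constant on the dyadic intervals of some generation (`IsStep`) contain the Haar
functions and are closed under products, and at each point the series defining `Ш` converges
absolutely on them, since fine generations contribute nothing and generation `j` contributes
`O(2^j)` (`IsStep.summable_shTerm`, `ShS_sum`). In particular `Ш(h_I h_K)` makes sense even for
`I = K`, where infinitely many coarse generations contribute.

Hence `Ш₁` and `Ш₂` act factorwise on finite tensor sums (`Sh1_tensorSum`, `Sh2_tensorSum`), and
the four terms of the iterated commutator factor into the product of the two one-parameter
commutators (`commSh_eq_sum`). Orthonormality of the Haar system identifies the coefficients with
`B̂` and `f̂` (`hatM_sum`, `hatV_sum`), so the infinite series reduces to a finite sum.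

A summand with `I ⊄ K` vanishes because `h_I` is then constant on `K`, where both `h_K` and `Ш h_K`
are supported (`commShS_haar_eq_zero`).
-/

open MeasureTheory Filter Set Matrix ENNReal Topology ComplexOrder

noncomputable section

/-- The dyadic interval `[k·2^{-j}, (k+1)·2^{-j})`. -/
def dyadicI (j k : ℤ) : Set ℝ :=
  Set.Ico ((k : ℝ) * (2 : ℝ) ^ (-j)) (((k : ℝ) + 1) * (2 : ℝ) ^ (-j))

/-- The dyadic rectangle `I × J` indexed by `q = ((j,k),(j',k'))`. -/
def dyadicRect (q : (ℤ × ℤ) × (ℤ × ℤ)) : Set (ℝ × ℝ) :=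
  (dyadicI q.1.1 q.1.2) ×ˢ (dyadicI q.2.1 q.2.2)

/-- The Haar function `h_I = |I|^{-1/2} (1_{I₋} - 1_{I₊})` of the dyadic interval indexed
by `(j,k)`; its left and right halves are the dyadic intervals `(j+1, 2k)` and `(j+1, 2k+1)`. -/
def haar (j k : ℤ) (x : ℝ) : ℝ :=
  Real.sqrt ((2 : ℝ) ^ j) *
    ((dyadicI (j + 1) (2 * k)).indicator (fun _ => (1 : ℝ)) x -
      (dyadicI (j + 1) (2 * k + 1)).indicator (fun _ => (1 : ℝ)) x)

/-- The non-cancellative Haar function `h_I¹ = |I|^{-1/2} 1_I`. -/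
def haarOne (j k : ℤ) (x : ℝ) : ℝ :=
  Real.sqrt ((2 : ℝ) ^ j) * (dyadicI j k).indicator (fun _ => (1 : ℝ)) x

/-- The two-parameter Haar function `h_{I×J} = h_I ⊗ h_J`. -/
def haar2 (q : (ℤ × ℤ) × (ℤ × ℤ)) (p : ℝ × ℝ) : ℝ :=
  haar q.1.1 q.1.2 p.1 * haar q.2.1 q.2.2 p.2

/-- The dyadic parent of the dyadic interval indexed by `(j,k)`. -/
def dyadicParent (q : ℤ × ℤ) : ℤ × ℤ := (q.1 - 1, Int.ediv q.2 2)

/-- Matrix-valued Haar coefficient `B̂(R) = ∫ B h_R` (entrywise). -/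
def hatM (d : ℕ) (B : ℝ × ℝ → Matrix (Fin d) (Fin d) ℂ) (q : (ℤ × ℤ) × (ℤ × ℤ)) :
    Matrix (Fin d) (Fin d) ℂ :=
  Matrix.of fun i l => ∫ p : ℝ × ℝ, B p i l * (haar2 q p : ℂ)

/-- Vector-valued Haar coefficient `f̂(R) = ⟨f, h_R⟩ ∈ ℂ^d`. -/
def hatV (d : ℕ) (f : ℝ × ℝ → Fin d → ℂ) (q : (ℤ × ℤ) × (ℤ × ℤ)) (i : Fin d) : ℂ :=
  ∫ p : ℝ × ℝ, f p i * (haar2 q p : ℂ)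

/-- Scalar Haar coefficient `b̂(R) = ∫ b h_R`. -/
def hatS (b : ℝ × ℝ → ℂ) (q : (ℤ × ℤ) × (ℤ × ℤ)) : ℂ :=
  ∫ p : ℝ × ℝ, b p * (haar2 q p : ℂ)

/-- Mixed wavelet coefficient `⟨f, g₁ ⊗ g₂⟩ ∈ ℂ^d`. -/
def coefMix (d : ℕ) (f : ℝ × ℝ → Fin d → ℂ) (g₁ g₂ : ℝ → ℝ) (i : Fin d) : ℂ :=
  ∫ p : ℝ × ℝ, f p i * ((g₁ p.1 * g₂ p.2 : ℝ) : ℂ)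

/-- The positive-semidefinite (Loewner) order on `d × d` complex matrices. -/
def matLE {d : ℕ} (A B : Matrix (Fin d) (Fin d) ℂ) : Prop := (B - A).PosSemidef

/-- `B` satisfies the two dyadic product BMO inequalities with constant `C`:
for every open set `U ⊆ ℝ²` of finite nonzero measure,
`(1/|U|) Σ_{R ⊆ U} B̂(R)B̂(R)* ≤ C² I_d` and `(1/|U|) Σ_{R ⊆ U} B̂(R)*B̂(R) ≤ C² I_d`. -/
def BMOCond (d : ℕ) (B : ℝ × ℝ → Matrix (Fin d) (Fin d) ℂ) (C : ℝ) : Prop :=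
  ∀ U : Set (ℝ × ℝ), IsOpen U → volume U ≠ 0 → volume U ≠ ⊤ →
    matLE (∑' q : {q : (ℤ × ℤ) × (ℤ × ℤ) // dyadicRect q ⊆ U},
        ((volume U).toReal)⁻¹ • (hatM d B q.1 * (hatM d B q.1)ᴴ))
      ((C ^ 2) • (1 : Matrix (Fin d) (Fin d) ℂ)) ∧
    matLE (∑' q : {q : (ℤ × ℤ) × (ℤ × ℤ) // dyadicRect q ⊆ U},
        ((volume U).toReal)⁻¹ • ((hatM d B q.1)ᴴ * hatM d B q.1))
      ((C ^ 2) • (1 : Matrix (Fin d) (Fin d) ℂ))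

/-- The dyadic product BMO norm: the least admissible constant. -/
def bmoNorm (d : ℕ) (B : ℝ × ℝ → Matrix (Fin d) (Fin d) ℂ) : ℝ :=
  sInf {C : ℝ | 0 ≤ C ∧ BMOCond d B C}

/-- The `L²(ℝ²; ℂ^d)` norm (with the Euclidean norm on `ℂ^d`). -/
def L2V (d : ℕ) (f : ℝ × ℝ → Fin d → ℂ) : ℝ≥0∞ :=
  eLpNorm (fun p => (WithLp.equiv 2 (Fin d → ℂ)).symm (f p)) 2 volume

/-- Hilbert transform in the first variable, as an a.e. principal value. -/
def H1s (f : ℝ × ℝ → ℂ) (p : ℝ × ℝ) : ℂ :=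
  limUnder (𝓝[>] (0 : ℝ)) fun ε : ℝ =>
    (Real.pi : ℂ)⁻¹ * ∫ z in {z : ℝ | ε < |p.1 - z|}, f (z, p.2) / ((p.1 - z : ℝ) : ℂ)

/-- Hilbert transform in the second variable. -/
def H2s (f : ℝ × ℝ → ℂ) (p : ℝ × ℝ) : ℂ :=
  limUnder (𝓝[>] (0 : ℝ)) fun ε : ℝ =>
    (Real.pi : ℂ)⁻¹ * ∫ z in {z : ℝ | ε < |p.2 - z|}, f (p.1, z) / ((p.2 - z : ℝ) : ℂ)

/-- Componentwise Hilbert transform in the first variable. -/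
def H1v (d : ℕ) (f : ℝ × ℝ → Fin d → ℂ) (p : ℝ × ℝ) (i : Fin d) : ℂ :=
  H1s (fun q => f q i) p

/-- Componentwise Hilbert transform in the second variable. -/
def H2v (d : ℕ) (f : ℝ × ℝ → Fin d → ℂ) (p : ℝ × ℝ) (i : Fin d) : ℂ :=
  H2s (fun q => f q i) p

/-- The iterated commutator `[[M_B, H₁], H₂] f = B H₁H₂ f − H₁(B H₂ f) − H₂(B H₁ f) + H₂H₁(Bf)`. -/
def commH (d : ℕ) (B : ℝ × ℝ → Matrix (Fin d) (Fin d) ℂ) (f : ℝ × ℝ → Fin d → ℂ) :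
    ℝ × ℝ → Fin d → ℂ := fun p =>
  (B p).mulVec (H1v d (H2v d f) p) - H1v d (fun q => (B q).mulVec (H2v d f q)) p
    - H2v d (fun q => (B q).mulVec (H1v d f q)) p
    + H2v d (H1v d (fun q => (B q).mulVec (f q))) p

/-- The scalar iterated commutator `[[M_b, H₁], H₂] f`. -/
def commHs (b f : ℝ × ℝ → ℂ) : ℝ × ℝ → ℂ := fun p =>
  b p * H1s (H2s f) p - H1s (fun q => b q * H2s f q) p - H2s (fun q => b q * H1s f q) p
    + H2s (H1s (fun q => b q * f q)) p

/-- The dyadic-shift image of the Haar function: `Ш(h_I) = (h_{I₋} - h_{I₊})/√2`. -/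
def shHaar (j k : ℤ) (x : ℝ) : ℝ :=
  (haar (j + 1) (2 * k) x - haar (j + 1) (2 * k + 1) x) / Real.sqrt 2

/-- The dyadic shift `Ш f = Σ_{I} ⟨f, h_I⟩ (h_{I₋} - h_{I₊})/√2`, realized pointwise as the
limit of its scale-truncated partial sums. -/
def ShS (f : ℝ → ℂ) (x : ℝ) : ℂ :=
  limUnder atTop fun N : ℕ =>
    ∑ j ∈ Finset.Icc (-(N : ℤ)) (N : ℤ),
      ∑' k : ℤ, (∫ t : ℝ, f t * (haar j k t : ℂ)) * (shHaar j k x : ℂ)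

/-- The dyadic shift in the first variable of a `ℂ^d`-valued function on `ℝ²`. -/
def Sh1 (d : ℕ) (f : ℝ × ℝ → Fin d → ℂ) (p : ℝ × ℝ) (i : Fin d) : ℂ :=
  ShS (fun t => f (t, p.2) i) p.1

/-- The dyadic shift in the second variable of a `ℂ^d`-valued function on `ℝ²`. -/
def Sh2 (d : ℕ) (f : ℝ × ℝ → Fin d → ℂ) (p : ℝ × ℝ) (i : Fin d) : ℂ :=
  ShS (fun t => f (p.1, t) i) p.2

/-- The iterated commutator `[[M_B, Ш₁], Ш₂] f`. -/
def commSh (d : ℕ) (B : ℝ × ℝ → Matrix (Fin d) (Fin d) ℂ) (f : ℝ × ℝ → Fin d → ℂ) :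
    ℝ × ℝ → Fin d → ℂ := fun p =>
  (B p).mulVec (Sh1 d (Sh2 d f) p) - Sh1 d (fun q => (B q).mulVec (Sh2 d f q)) p
    - Sh2 d (fun q => (B q).mulVec (Sh1 d f q)) p
    + Sh2 d (Sh1 d (fun q => (B q).mulVec (f q))) p

/-- One-parameter commutator with the dyadic shift: `[M_g, Ш] u = g·Шu − Ш(gu)`. -/
def commShS (g u : ℝ → ℂ) : ℝ → ℂ := fun x => g x * ShS u x - ShS (fun t => g t * u t) x


/-- Paraproduct `P¹_B f = Σ_{I,J} ε_J B̂(I×J̃) ⟨f, h_I ⊗ h_J⟩ h_I¹ ⊗ h_J |I|^{-1/2}|J̃|^{-1/2}`. -/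
def P1 (d : ℕ) (B : ℝ × ℝ → Matrix (Fin d) (Fin d) ℂ) (ε : ℤ × ℤ → ℝ)
    (f : ℝ × ℝ → Fin d → ℂ) (p : ℝ × ℝ) : Fin d → ℂ :=
  ∑' q : (ℤ × ℤ) × (ℤ × ℤ),
    ((ε q.2 * (haarOne q.1.1 q.1.2 p.1 * haar q.2.1 q.2.2 p.2) *
        (Real.sqrt ((2 : ℝ) ^ q.1.1) * Real.sqrt ((2 : ℝ) ^ (dyadicParent q.2).1)) : ℝ) : ℂ) •
      (hatM d B (q.1, dyadicParent q.2)).mulVec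
        (coefMix d f (haar q.1.1 q.1.2) (haar q.2.1 q.2.2))

/-- Paraproduct `P²_B f = Σ_{I,J} ε_J B̂(I×J̃) ⟨f, h_I¹ ⊗ h_{J̃}⟩ h_I ⊗ h_J |I|^{-1/2}|J̃|^{-1/2}`. -/
def P2 (d : ℕ) (B : ℝ × ℝ → Matrix (Fin d) (Fin d) ℂ) (ε : ℤ × ℤ → ℝ)
    (f : ℝ × ℝ → Fin d → ℂ) (p : ℝ × ℝ) : Fin d → ℂ :=
  ∑' q : (ℤ × ℤ) × (ℤ × ℤ),
    ((ε q.2 * (haar q.1.1 q.1.2 p.1 * haar q.2.1 q.2.2 p.2) *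
        (Real.sqrt ((2 : ℝ) ^ q.1.1) * Real.sqrt ((2 : ℝ) ^ (dyadicParent q.2).1)) : ℝ) : ℂ) •
      (hatM d B (q.1, dyadicParent q.2)).mulVec
        (coefMix d f (haarOne q.1.1 q.1.2) (haar (dyadicParent q.2).1 (dyadicParent q.2).2))

/-- Paraproduct `P³_B f = Σ_{I,J} B̂(I×J) ⟨f, h_I¹ ⊗ h_J¹⟩ h_I ⊗ h_J |I|^{-1/2}|J|^{-1/2}`. -/
def P3 (d : ℕ) (B : ℝ × ℝ → Matrix (Fin d) (Fin d) ℂ)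
    (f : ℝ × ℝ → Fin d → ℂ) (p : ℝ × ℝ) : Fin d → ℂ :=
  ∑' q : (ℤ × ℤ) × (ℤ × ℤ),
    (((haar q.1.1 q.1.2 p.1 * haar q.2.1 q.2.2 p.2) *
        (Real.sqrt ((2 : ℝ) ^ q.1.1) * Real.sqrt ((2 : ℝ) ^ q.2.1)) : ℝ) : ℂ) •
      (hatM d B q).mulVec (coefMix d f (haarOne q.1.1 q.1.2) (haarOne q.2.1 q.2.2))

/-- Paraproduct `P⁴_B f = Σ_{I,J} B̂(I×J) ⟨f, h_I ⊗ h_J¹⟩ h_I¹ ⊗ h_J |I|^{-1/2}|J|^{-1/2}`. -/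
def P4 (d : ℕ) (B : ℝ × ℝ → Matrix (Fin d) (Fin d) ℂ)
    (f : ℝ × ℝ → Fin d → ℂ) (p : ℝ × ℝ) : Fin d → ℂ :=
  ∑' q : (ℤ × ℤ) × (ℤ × ℤ),
    (((haarOne q.1.1 q.1.2 p.1 * haar q.2.1 q.2.2 p.2) *
        (Real.sqrt ((2 : ℝ) ^ q.1.1) * Real.sqrt ((2 : ℝ) ^ q.2.1)) : ℝ) : ℂ) •
      (hatM d B q).mulVec (coefMix d f (haar q.1.1 q.1.2) (haarOne q.2.1 q.2.2))

/-- Paraproduct `P⁵_B f = Σ_{I,J} B̂(I×J) ⟨f, h_I¹ ⊗ h_J⟩ h_I ⊗ h_J¹ |I|^{-1/2}|J|^{-1/2}`. -/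
def P5 (d : ℕ) (B : ℝ × ℝ → Matrix (Fin d) (Fin d) ℂ)
    (f : ℝ × ℝ → Fin d → ℂ) (p : ℝ × ℝ) : Fin d → ℂ :=
  ∑' q : (ℤ × ℤ) × (ℤ × ℤ),
    (((haar q.1.1 q.1.2 p.1 * haarOne q.2.1 q.2.2 p.2) *
        (Real.sqrt ((2 : ℝ) ^ q.1.1) * Real.sqrt ((2 : ℝ) ^ q.2.1)) : ℝ) : ℂ) •
      (hatM d B q).mulVec (coefMix d f (haarOne q.1.1 q.1.2) (haar q.2.1 q.2.2))

/-- The matrix-valued bilinear paraproduct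
`Π₁(f,g) = Σ_{I,J} ⟨g, h_I ⊗ h_J⟩ ⟨f, h_I¹ ⊗ h_J¹⟩* h_I ⊗ h_J |I|^{-1/2}|J|^{-1/2}`. -/
def Pi1 (d : ℕ) (f g : ℝ × ℝ → Fin d → ℂ) (p : ℝ × ℝ) : Matrix (Fin d) (Fin d) ℂ :=
  ∑' q : (ℤ × ℤ) × (ℤ × ℤ),
    (((haar q.1.1 q.1.2 p.1 * haar q.2.1 q.2.2 p.2) *
        (Real.sqrt ((2 : ℝ) ^ q.1.1) * Real.sqrt ((2 : ℝ) ^ q.2.1)) : ℝ) : ℂ) •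
      Matrix.of (fun i l =>
        coefMix d g (haar q.1.1 q.1.2) (haar q.2.1 q.2.2) i *
          (starRingEnd ℂ) (coefMix d f (haarOne q.1.1 q.1.2) (haarOne q.2.1 q.2.2) l))

/-- The matrix-valued bilinear paraproduct
`Π₂(f,g) = Σ_{I,J} ⟨g, h_I¹ ⊗ h_J⟩ ⟨f, h_I ⊗ h_J¹⟩* h_I ⊗ h_J |I|^{-1/2}|J|^{-1/2}`. -/
def Pi2 (d : ℕ) (f g : ℝ × ℝ → Fin d → ℂ) (p : ℝ × ℝ) : Matrix (Fin d) (Fin d) ℂ :=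
  ∑' q : (ℤ × ℤ) × (ℤ × ℤ),
    (((haar q.1.1 q.1.2 p.1 * haar q.2.1 q.2.2 p.2) *
        (Real.sqrt ((2 : ℝ) ^ q.1.1) * Real.sqrt ((2 : ℝ) ^ q.2.1)) : ℝ) : ℂ) •
      Matrix.of (fun i l =>
        coefMix d g (haarOne q.1.1 q.1.2) (haar q.2.1 q.2.2) i *
          (starRingEnd ℂ) (coefMix d f (haar q.1.1 q.1.2) (haarOne q.2.1 q.2.2) l))

/-- The squared Hilbert–Schmidt (Frobenius) norm of a matrix. -/
def hsSq {d : ℕ} (A : Matrix (Fin d) (Fin d) ℂ) : ℝ := ∑ i, ∑ l, ‖A i l‖ ^ 2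

/-- The dyadic square function of a matrix-valued function on `ℝ²`:
`S(F)(x,y) = (Σ_R ‖F̂(R)‖_{HS}² 1_R(x,y)/|R|)^{1/2}`. -/
def sqFnM (d : ℕ) (F : ℝ × ℝ → Matrix (Fin d) (Fin d) ℂ) (p : ℝ × ℝ) : ℝ :=
  Real.sqrt (∑' q : (ℤ × ℤ) × (ℤ × ℤ),
    hsSq (hatM d F q) * (dyadicRect q).indicator (fun _ => (1 : ℝ)) p * (2 : ℝ) ^ (q.1.1 + q.2.1))

/-- The dyadic square function of a `ℂ^d`-valued function on `ℝ²`. -/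
def sqFnV (d : ℕ) (g : ℝ × ℝ → Fin d → ℂ) (p : ℝ × ℝ) : ℝ :=
  Real.sqrt (∑' q : (ℤ × ℤ) × (ℤ × ℤ),
    (∑ i, ‖hatV d g q i‖ ^ 2) * (dyadicRect q).indicator (fun _ => (1 : ℝ)) p *
      (2 : ℝ) ^ (q.1.1 + q.2.1))

/-- The pointwise Euclidean norm `‖f(p)‖_{ℂ^d}`. -/
def vnorm (d : ℕ) (f : ℝ × ℝ → Fin d → ℂ) (p : ℝ × ℝ) : ℝ := Real.sqrt (∑ i, ‖f p i‖ ^ 2)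

/-- The strong (dyadic-rectangle) maximal function. -/
def strongMax (u : ℝ × ℝ → ℝ) (p : ℝ × ℝ) : ℝ≥0∞ :=
  ⨆ (q : (ℤ × ℤ) × (ℤ × ℤ)) (_ : p ∈ dyadicRect q),
    (volume (dyadicRect q))⁻¹ * ∫⁻ x in dyadicRect q, ENNReal.ofReal |u x|

/-- The one-dimensional Hardy–Littlewood maximal function. -/
def M1D (u : ℝ → ℝ) (y : ℝ) : ℝ≥0∞ :=
  ⨆ (a : ℝ) (b : ℝ) (_ : y ∈ Set.Ioo a b),
    (volume (Set.Ioo a b))⁻¹ * ∫⁻ t in Set.Ioo a b, ENNReal.ofReal |u t|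

/-- Average of `f` over the dyadic rectangle indexed by `q`. -/
def rectAvg (f : ℝ × ℝ → ℝ) (q : (ℤ × ℤ) × (ℤ × ℤ)) : ℝ :=
  ((volume (dyadicRect q)).toReal)⁻¹ * ∫ p in dyadicRect q, f p

/-- The scalar dyadic product BMO condition with constant `C`. -/
def scalarBMOCond (b : ℝ × ℝ → ℂ) (C : ℝ) : Prop :=
  ∀ U : Set (ℝ × ℝ), IsOpen U → volume U ≠ 0 → volume U ≠ ⊤ →
    ((volume U).toReal)⁻¹ *
      (∑' q : {q : (ℤ × ℤ) × (ℤ × ℤ) // dyadicRect q ⊆ U}, ‖hatS b q.1‖ ^ 2) ≤ C ^ 2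

/-- The scalar dyadic product BMO norm, as a supremum over open sets. -/
def scalarBmoNorm (b : ℝ × ℝ → ℂ) : ℝ :=
  ⨆ U : Set (ℝ × ℝ), ⨆ (_ : IsOpen U ∧ volume U ≠ 0 ∧ volume U ≠ ⊤),
    Real.sqrt (((volume U).toReal)⁻¹ *
      ∑' q : {q : (ℤ × ℤ) × (ℤ × ℤ) // dyadicRect q ⊆ U}, ‖hatS b q.1‖ ^ 2)

/-! ### Dyadic cells and step functions -/

/-- The index of the generation-`j` dyadic interval containing `x`. -/
def cell (j : ℤ) (x : ℝ) : ℤ := ⌊x * (2 : ℝ) ^ j⌋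

lemma mem_dyadicI_iff (j k : ℤ) (x : ℝ) : x ∈ dyadicI j k ↔ cell j x = k := by
  have h2 : (0 : ℝ) < 2 ^ j := by positivity
  rw [cell, Int.floor_eq_iff, dyadicI, Set.mem_Ico, _root_.zpow_neg, ← div_eq_mul_inv, ← div_eq_mul_inv,
    div_le_iff₀ h2, lt_div_iff₀ h2]

lemma cell_succ (j : ℤ) (x : ℝ) : cell j x = cell (j + 1) x / 2 := by
  have h := Int.floor_div_natCast (x * (2 : ℝ) ^ (j + 1)) 2
  have e : x * (2 : ℝ) ^ (j + 1) / ((2 : ℕ) : ℝ) = x * 2 ^ j := by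
    rw [zpow_add_one₀ (by norm_num)]; push_cast; ring
  rw [e] at h
  simpa [cell] using h

lemma cell_coarsen {j J : ℤ} (hj : j ≤ J) {x y : ℝ} (h : cell J x = cell J y) :
    cell j x = cell j y := by
  induction J, hj using Int.leInduction with
  | base => exact h
  | succ n _ ih =>
    apply ih
    rw [cell_succ, h, ← cell_succ]

lemma indicator_dyadicI (j k : ℤ) (x : ℝ) :
    (dyadicI j k).indicator (fun _ => (1 : ℝ)) x = if cell j x = k then 1 else 0 := by
  classical
  simp only [Set.indicator_apply, mem_dyadicI_iff]

lemma haar_eq (j k : ℤ) (x : ℝ) :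
    haar j k x = Real.sqrt ((2 : ℝ) ^ j) *
      ((if cell (j + 1) x = 2 * k then 1 else 0) -
        (if cell (j + 1) x = 2 * k + 1 then 1 else 0)) := by
  simp only [haar, indicator_dyadicI]

lemma haar_eq_zero {j k : ℤ} {x : ℝ} (h : cell j x ≠ k) : haar j k x = 0 := by
  have e := cell_succ j x
  rw [haar_eq, if_neg (by omega), if_neg (by omega)]
  simp

lemma abs_haar_le (j k : ℤ) (x : ℝ) : |haar j k x| ≤ Real.sqrt ((2 : ℝ) ^ j) := by
  rw [haar_eq, abs_mul, abs_of_nonneg (Real.sqrt_nonneg _)]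
  apply mul_le_of_le_one_right (Real.sqrt_nonneg _)
  split_ifs <;> norm_num

lemma haar_mul_self (j k : ℤ) (x : ℝ) :
    haar j k x * haar j k x = (2 : ℝ) ^ j * (dyadicI j k).indicator (fun _ => (1 : ℝ)) x := by
  have hs : Real.sqrt ((2 : ℝ) ^ j) * Real.sqrt ((2 : ℝ) ^ j) = 2 ^ j :=
    Real.mul_self_sqrt (by positivity)
  have e := cell_succ j x
  rw [indicator_dyadicI]
  by_cases h : cell j x = k
  · rw [if_pos h, haar_eq, mul_mul_mul_comm, hs]
    rcases Int.emod_two_eq_zero_or_one (cell (j + 1) x) with h' | h'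
    · rw [if_pos (by omega), if_neg (by omega)]; ring
    · rw [if_neg (by omega), if_pos (by omega)]; ring
  · rw [if_neg h, haar_eq_zero h]; ring

lemma haar_congr {j k J : ℤ} (hj : j + 1 ≤ J) {x y : ℝ} (h : cell J x = cell J y) :
    haar j k x = haar j k y := by
  rw [haar_eq, haar_eq, cell_coarsen hj h]

lemma measurableSet_dyadicI (j k : ℤ) : MeasurableSet (dyadicI j k) := measurableSet_Ico

lemma volume_dyadicI (j k : ℤ) : volume (dyadicI j k) = ENNReal.ofReal ((2 : ℝ) ^ (-j)) := by
  rw [dyadicI, Real.volume_Ico]; congr 1; ring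

lemma integrable_indicator_dyadicI (j k : ℤ) :
    Integrable ((dyadicI j k).indicator (fun _ => (1 : ℝ))) := by
  rw [integrable_indicator_iff (measurableSet_dyadicI j k)]
  exact integrableOn_const (by rw [volume_dyadicI]; exact ENNReal.ofReal_ne_top)

lemma integral_indicator_dyadicI (j k : ℤ) :
    ∫ x, (dyadicI j k).indicator (fun _ => (1 : ℝ)) x = (2 : ℝ) ^ (-j) := by
  rw [integral_indicator (measurableSet_dyadicI j k), setIntegral_const, measureReal_def,
    volume_dyadicI, ENNReal.toReal_ofReal (by positivity)]
  simp

lemma integrable_haar (j k : ℤ) : Integrable (haar j k) :=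
  ((integrable_indicator_dyadicI _ _).sub (integrable_indicator_dyadicI _ _)).const_mul _

lemma integral_haar (j k : ℤ) : ∫ x, haar j k x = 0 := by
  simp only [haar]
  rw [integral_const_mul, integral_sub (integrable_indicator_dyadicI _ _)
    (integrable_indicator_dyadicI _ _), integral_indicator_dyadicI, integral_indicator_dyadicI]
  simp

/-- Bounded integrable functions that are constant on the dyadic intervals of some generation.
They form an algebra containing the Haar functions, and the series defining `Ш` converges
absolutely on them at every point. -/
structure IsStep (f : ℝ → ℂ) : Prop where
  integrable : Integrable f
  bdd : ∃ C, ∀ x, ‖f x‖ ≤ C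
  loc : ∃ J : ℤ, ∀ x y, cell J x = cell J y → f x = f y

lemma isStep_haar (j k : ℤ) : IsStep fun x => (haar j k x : ℂ) where
  integrable := (integrable_haar j k).ofReal
  bdd := ⟨Real.sqrt ((2 : ℝ) ^ j), fun x => by
    rw [Complex.norm_real]; exact abs_haar_le j k x⟩
  loc := ⟨j + 1, fun x y h => by rw [haar_congr le_rfl h]⟩

lemma IsStep.mul {f g : ℝ → ℂ} (hf : IsStep f) (hg : IsStep g) : IsStep fun x => f x * g x where
  integrable := by
    obtain ⟨C, hC⟩ := hf.bdd
    exact hg.integrable.bdd_mul hf.integrable.1 (ae_of_all _ hC)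
  bdd := by
    obtain ⟨C, hC⟩ := hf.bdd
    obtain ⟨D, hD⟩ := hg.bdd
    refine ⟨C * D, fun x => ?_⟩
    rw [norm_mul]
    exact mul_le_mul (hC x) (hD x) (norm_nonneg _) ((norm_nonneg _).trans (hC x))
  loc := by
    obtain ⟨J, hJ⟩ := hf.loc
    obtain ⟨K, hK⟩ := hg.loc
    refine ⟨max J K, fun x y h => ?_⟩
    rw [hJ x y (cell_coarsen (le_max_left _ _) h), hK x y (cell_coarsen (le_max_right _ _) h)]

lemma IsStep.integrable_mul_haar {f : ℝ → ℂ} (hf : IsStep f) (j k : ℤ) :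
    Integrable fun x => f x * (haar j k x : ℂ) :=
  (hf.mul (isStep_haar j k)).integrable

/-! ### Haar coefficients -/

/-- A function that is constant on the dyadic interval `(j, k)` is orthogonal to `h_{(j,k)}`. -/
lemma integral_mul_haar_eq_zero {f : ℝ → ℂ} {j k : ℤ}
    (h : ∀ x y, cell j x = k → cell j y = k → f x = f y) :
    ∫ x, f x * (haar j k x : ℂ) = 0 := by
  have hc : ∃ c : ℂ, ∀ x, f x * (haar j k x : ℂ) = c * (haar j k x : ℂ) := by
    by_cases hne : ∃ y, cell j y = k
    · obtain ⟨y, hy⟩ := hne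
      refine ⟨f y, fun x => ?_⟩
      by_cases hx : cell j x = k
      · rw [h x y hx hy]
      · rw [haar_eq_zero hx]; simp
    · refine ⟨0, fun x => ?_⟩
      rw [haar_eq_zero fun hx => hne ⟨x, hx⟩]; simp
  obtain ⟨c, hc⟩ := hc
  simp_rw [hc]
  rw [integral_const_mul, integral_complex_ofReal, integral_haar]
  simp

lemma integral_haar_mul_haar (q r : ℤ × ℤ) :
    ∫ x, (haar q.1 q.2 x : ℂ) * (haar r.1 r.2 x : ℂ) = if q = r then 1 else 0 := by
  obtain ⟨j, k⟩ := q
  obtain ⟨j', k'⟩ := r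
  rcases lt_trichotomy j j' with h | h | h
  · rw [if_neg (by simp; omega)]
    exact integral_mul_haar_eq_zero fun x y hx hy => by
      rw [haar_congr (J := j') (by omega) (hx.trans hy.symm)]
  · subst h
    by_cases hk : k = k'
    · subst hk
      simp only [if_true]
      simp_rw [← Complex.ofReal_mul, haar_mul_self]
      rw [integral_complex_ofReal, integral_const_mul, integral_indicator_dyadicI,
        ← zpow_add₀ (by norm_num)]
      simp
    · rw [if_neg (by simpa using hk)]
      refine integral_mul_haar_eq_zero fun x y hx hy => ?_
      simp only at hx hy ⊢
      rw [haar_eq_zero (by omega), haar_eq_zero (by omega)]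
  · rw [if_neg (by simp; omega)]
    simp_rw [mul_comm ((haar j k _ : ℝ) : ℂ)]
    exact integral_mul_haar_eq_zero fun x y hx hy => by
      rw [haar_congr (J := j) (by omega) (hx.trans hy.symm)]

lemma IsStep.norm_integral_mul_haar_le {f : ℝ → ℂ} (hf : IsStep f) (j k : ℤ) :
    ‖∫ x, f x * (haar j k x : ℂ)‖ ≤ (∫ x, ‖f x‖) * Real.sqrt ((2 : ℝ) ^ j) := by
  rw [← integral_mul_const]
  refine norm_integral_le_of_norm_le (hf.integrable.norm.mul_const _) (ae_of_all _ fun x => ?_)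
  rw [norm_mul, Complex.norm_real]
  exact mul_le_mul_of_nonneg_left (abs_haar_le j k x) (norm_nonneg _)

/-! ### The dyadic shift on step functions -/

lemma shHaar_eq_zero {j k : ℤ} {x : ℝ} (h : cell j x ≠ k) : shHaar j k x = 0 := by
  have e := cell_succ j x
  rw [shHaar, haar_eq_zero (by omega), haar_eq_zero (by omega)]
  simp

lemma abs_shHaar_le (j k : ℤ) (x : ℝ) : |shHaar j k x| ≤ 2 * Real.sqrt ((2 : ℝ) ^ j) := by
  have h2 : (0 : ℝ) < Real.sqrt 2 := by positivity
  have hs : Real.sqrt ((2 : ℝ) ^ (j + 1)) = Real.sqrt (2 ^ j) * Real.sqrt 2 := by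
    rw [zpow_add_one₀ (by norm_num), Real.sqrt_mul (by positivity)]
  rw [shHaar, abs_div, abs_of_pos h2, div_le_iff₀ h2]
  calc _ ≤ |haar (j + 1) (2 * k) x| + |haar (j + 1) (2 * k + 1) x| := abs_sub _ _
    _ ≤ Real.sqrt ((2 : ℝ) ^ (j + 1)) + Real.sqrt ((2 : ℝ) ^ (j + 1)) :=
        add_le_add (abs_haar_le _ _ _) (abs_haar_le _ _ _)
    _ = _ := by rw [hs]; ring

/-- The generation-`j` contribution to `Ш f (x)`: only the interval containing `x` matters. -/
def shTerm (f : ℝ → ℂ) (x : ℝ) (j : ℤ) : ℂ :=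
  (∫ t, f t * (haar j (cell j x) t : ℂ)) * (shHaar j (cell j x) x : ℂ)

lemma tsum_eq_shTerm (f : ℝ → ℂ) (x : ℝ) (j : ℤ) :
    ∑' k : ℤ, (∫ t : ℝ, f t * (haar j k t : ℂ)) * (shHaar j k x : ℂ) = shTerm f x j := by
  rw [tsum_eq_single (cell j x)]
  · rfl
  · intro k hk
    rw [shHaar_eq_zero hk.symm]
    simp

/-- Fine generations contribute nothing, and generation `j` contributes `O(2^j)`. -/
lemma IsStep.summable_shTerm {f : ℝ → ℂ} (hf : IsStep f) (x : ℝ) : Summable (shTerm f x) := by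
  obtain ⟨J, hJ⟩ := hf.loc
  have hzero : ∀ j, J ≤ j → shTerm f x j = 0 := fun j hj => by
    rw [shTerm, integral_mul_haar_eq_zero fun a b ha hb =>
      hJ a b (cell_coarsen hj (ha.trans hb.symm)), zero_mul]
  have hle : ∀ j, ‖shTerm f x j‖ ≤ 2 * (∫ t, ‖f t‖) * (2 : ℝ) ^ j := fun j => by
    rw [shTerm, norm_mul, Complex.norm_real]
    calc _ ≤ ((∫ t, ‖f t‖) * Real.sqrt ((2 : ℝ) ^ j)) * (2 * Real.sqrt ((2 : ℝ) ^ j)) :=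
          mul_le_mul (hf.norm_integral_mul_haar_le _ _) (abs_shHaar_le _ _ _) (abs_nonneg _)
            (by positivity)
      _ = 2 * (∫ t, ‖f t‖) * (Real.sqrt ((2 : ℝ) ^ j) * Real.sqrt ((2 : ℝ) ^ j)) := by ring
      _ = _ := by rw [Real.mul_self_sqrt (by positivity)]
  rw [summable_int_iff_summable_nat_and_neg]
  constructor
  · refine summable_of_ne_finset_zero (s := Finset.range J.toNat) fun n hn => hzero _ ?_
    rw [Finset.mem_range] at hn
    omega
  · refine Summable.of_norm_bounded
      (summable_geometric_two.mul_left (2 * ∫ t, ‖f t‖)) fun n => ?_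
    convert hle (-(n : ℤ)) using 2
    simp

lemma IsStep.ShS_eq {f : ℝ → ℂ} (hf : IsStep f) (x : ℝ) : ShS f x = ∑' j, shTerm f x j := by
  have h := (hf.summable_shTerm x).hasSum.comp (Finset.tendsto_Icc_neg (R := ℤ))
  refine Tendsto.limUnder_eq ?_
  simp_rw [tsum_eq_shTerm]
  exact h

/-- Linearity of `Ш` on step functions. -/
lemma ShS_sum {ι : Type*} (S : Finset ι) (c : ι → ℂ) (u : ι → ℝ → ℂ)
    (hu : ∀ a ∈ S, IsStep (u a)) (x : ℝ) :
    ShS (fun t => ∑ a ∈ S, c a * u a t) x = ∑ a ∈ S, c a * ShS (u a) x := by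
  have hterm : ∀ j, shTerm (fun t => ∑ a ∈ S, c a * u a t) x j =
      ∑ a ∈ S, c a * shTerm (u a) x j := fun j => by
    simp only [shTerm, Finset.sum_mul, mul_assoc]
    rw [integral_finsetSum _ fun a ha => ((hu a ha).integrable_mul_haar _ _).const_mul _,
      Finset.sum_mul]
    simp only [integral_const_mul, mul_assoc]
  have hlim : Tendsto (fun N : ℕ => ∑ j ∈ Finset.Icc (-(N : ℤ)) N,
      shTerm (fun t => ∑ a ∈ S, c a * u a t) x j) atTop
      (𝓝 (∑ a ∈ S, c a * ShS (u a) x)) := by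
    have h : HasSum (shTerm (fun t => ∑ a ∈ S, c a * u a t) x) (∑ a ∈ S, c a * ShS (u a) x) := by
      simp_rw [funext hterm]
      refine hasSum_sum fun a ha => ?_
      rw [(hu a ha).ShS_eq]
      exact ((hu a ha).summable_shTerm x).hasSum.mul_left _
    exact h.comp (Finset.tendsto_Icc_neg (R := ℤ))
  refine Tendsto.limUnder_eq ?_
  simp_rw [tsum_eq_shTerm]
  exact hlim

lemma ShS_const_mul {f : ℝ → ℂ} (c : ℂ) (hf : IsStep f) (x : ℝ) :
    ShS (fun t => c * f t) x = c * ShS f x := by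
  simpa using ShS_sum (Finset.univ : Finset Unit) (fun _ => c) (fun _ => f) (fun _ _ => hf) x

lemma ShS_haar (j k : ℤ) (x : ℝ) :
    ShS (fun t => (haar j k t : ℂ)) x = (shHaar j k x : ℂ) := by
  have hterm : ∀ i, shTerm (fun t => (haar j k t : ℂ)) x i =
      (if (j, k) = (i, cell i x) then 1 else 0) * (shHaar i (cell i x) x : ℂ) := fun i => by
    rw [shTerm, ← integral_haar_mul_haar (j, k) (i, cell i x)]
  rw [(isStep_haar j k).ShS_eq, tsum_eq_single j]
  · rw [hterm]
    by_cases h : cell j x = k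
    · rw [h]; simp
    · rw [shHaar_eq_zero h, if_neg (by simpa using Ne.symm h)]; simp
  · intro i hi
    rw [hterm, if_neg (by simp [hi.symm]), zero_mul]

/-! ### Vanishing summands -/

/-- If `h_I` takes a constant value `c` on `K`, then `[M_{h_I}, Ш] h_K = 0`, because `h_K` and
`Ш h_K` are both supported in `K`. -/
lemma commShS_eq_zero_of_const {j k j' k' : ℤ} (c : ℝ)
    (h : ∀ x, cell j' x = k' → haar j k x = c) (x : ℝ) :
    commShS (fun x => (haar j k x : ℂ)) (fun x => (haar j' k' x : ℂ)) x = 0 := by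
  have e : (fun t => (haar j k t : ℂ) * (haar j' k' t : ℂ)) =
      fun t => (c : ℂ) * (haar j' k' t : ℂ) := by
    funext t
    by_cases ht : cell j' t = k'
    · rw [h t ht]
    · rw [haar_eq_zero ht]; simp
  rw [commShS, e, ShS_const_mul _ (isStep_haar _ _), ShS_haar]
  by_cases hx : cell j' x = k'
  · rw [h x hx, sub_self]
  · rw [shHaar_eq_zero hx]; simp

lemma commShS_haar_eq_zero {j k j' k' : ℤ} (h : ¬ dyadicI j k ⊆ dyadicI j' k') (x : ℝ) :
    commShS (fun x => (haar j k x : ℂ)) (fun x => (haar j' k' x : ℂ)) x = 0 := by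
  rcases lt_or_ge j j' with hj | hj
  · by_cases hne : ∃ y, cell j' y = k'
    · obtain ⟨y, hy⟩ := hne
      exact commShS_eq_zero_of_const (haar j k y)
        (fun t ht => haar_congr (J := j') (by omega) (ht.trans hy.symm)) x
    · exact commShS_eq_zero_of_const 0 (fun t ht => absurd ⟨t, ht⟩ hne) x
  -- Here `I` is no longer than `K`, so failure of inclusion means that they are disjoint.
  · refine commShS_eq_zero_of_const 0 (fun t ht => haar_eq_zero fun ht' => h fun y hy => ?_) x
    rw [mem_dyadicI_iff] at hy ⊢
    rw [← ht]
    exact cell_coarsen hj (hy.trans ht'.symm)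

/-! ### Two-parameter expansions -/

/-- The finite tensor combination `Σ_{a ∈ S} (u_a ⊗ w_a) c_a`. -/
def tensorSum {ι : Type*} {d : ℕ} (S : Finset ι) (u w : ι → ℝ → ℂ) (c : ι → Fin d → ℂ) :
    ℝ × ℝ → Fin d → ℂ :=
  fun p => ∑ a ∈ S, (u a p.1 * w a p.2) • c a

lemma Sh1_tensorSum {ι : Type*} {d : ℕ} {S : Finset ι} {u w : ι → ℝ → ℂ} {c : ι → Fin d → ℂ}
    (hu : ∀ a, IsStep (u a)) :
    Sh1 d (tensorSum S u w c) = tensorSum S (fun a => ShS (u a)) w c := by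
  funext p i
  have h := ShS_sum S (fun a => w a p.2 * c a i) u (fun a _ => hu a) p.1
  simp only [Sh1, tensorSum, Finset.sum_apply, Pi.smul_apply, smul_eq_mul]
  convert h using 2
  · funext t
    exact Finset.sum_congr rfl fun a _ => by ring
  · ring

lemma Sh2_tensorSum {ι : Type*} {d : ℕ} {S : Finset ι} {u w : ι → ℝ → ℂ} {c : ι → Fin d → ℂ}
    (hw : ∀ a, IsStep (w a)) :
    Sh2 d (tensorSum S u w c) = tensorSum S u (fun a => ShS (w a)) c := by
  funext p i
  have h := ShS_sum S (fun a => u a p.1 * c a i) w (fun a _ => hw a) p.2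
  simp only [Sh2, tensorSum, Finset.sum_apply, Pi.smul_apply, smul_eq_mul]
  convert h using 2
  · funext t
    exact Finset.sum_congr rfl fun a _ => by ring
  · ring

lemma mulVec_tensorSum {ι : Type*} {d : ℕ} (s : Finset ((ℤ × ℤ) × (ℤ × ℤ)))
    (A : ((ℤ × ℤ) × (ℤ × ℤ)) → Matrix (Fin d) (Fin d) ℂ)
    (S : Finset ι) (u w : ι → ℝ → ℂ) (c : ι → Fin d → ℂ) (p : ℝ × ℝ) :
    (∑ q ∈ s, (haar2 q p : ℂ) • A q).mulVec (tensorSum S u w c p) =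
      tensorSum (s ×ˢ S) (fun a x => (haar a.1.1.1 a.1.1.2 x : ℂ) * u a.2 x)
        (fun a y => (haar a.1.2.1 a.1.2.2 y : ℂ) * w a.2 y)
        (fun a => (A a.1).mulVec (c a.2)) p := by
  rw [Matrix.sum_mulVec, tensorSum, tensorSum, Finset.sum_product]
  refine Finset.sum_congr rfl fun q _ => ?_
  rw [Matrix.mulVec_sum]
  refine Finset.sum_congr rfl fun a _ => ?_
  rw [Matrix.smul_mulVec, Matrix.mulVec_smul, smul_smul]
  congr 1
  simp only [haar2]
  push_cast
  ring

/-- The iterated commutator of a finite Haar sum with a finite Haar sum is the tensor combination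
of the one-parameter commutators, by linearity and
`(a₁ - b₁)(a₂ - b₂) = a₁a₂ - b₁a₂ - a₁b₂ + b₁b₂`. -/
lemma commSh_eq_sum {d : ℕ} (s t : Finset ((ℤ × ℤ) × (ℤ × ℤ)))
    (A : ((ℤ × ℤ) × (ℤ × ℤ)) → Matrix (Fin d) (Fin d) ℂ)
    (v : ((ℤ × ℤ) × (ℤ × ℤ)) → Fin d → ℂ) :
    commSh d (fun p => ∑ q ∈ s, (haar2 q p : ℂ) • A q) (fun p => ∑ q ∈ t, (haar2 q p : ℂ) • v q) =
      tensorSum (s ×ˢ t)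
        (fun r => commShS (fun x => (haar r.1.1.1 r.1.1.2 x : ℂ))
          (fun x => (haar r.2.1.1 r.2.1.2 x : ℂ)))
        (fun r => commShS (fun x => (haar r.1.2.1 r.1.2.2 x : ℂ))
          (fun x => (haar r.2.2.1 r.2.2.2 x : ℂ)))
        (fun r => (A r.1).mulVec (v r.2)) := by
  have hf : (fun p => ∑ q ∈ t, (haar2 q p : ℂ) • v q) =
      tensorSum t (fun q x => (haar q.1.1 q.1.2 x : ℂ)) (fun q y => (haar q.2.1 q.2.2 y : ℂ)) v := by
    funext p
    simp only [tensorSum, haar2, Complex.ofReal_mul]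
  funext p
  rw [hf, commSh, Sh2_tensorSum fun q => isStep_haar _ _, Sh1_tensorSum fun q => isStep_haar _ _,
    Sh1_tensorSum fun q => isStep_haar _ _]
  simp only [mulVec_tensorSum]
  rw [Sh1_tensorSum fun r => (isStep_haar _ _).mul (isStep_haar _ _),
    Sh2_tensorSum fun r => (isStep_haar _ _).mul (isStep_haar _ _),
    Sh1_tensorSum fun r => (isStep_haar _ _).mul (isStep_haar _ _),
    Sh2_tensorSum fun r => (isStep_haar _ _).mul (isStep_haar _ _)]
  simp only [tensorSum, ← Finset.sum_sub_distrib, ← Finset.sum_add_distrib, ← sub_smul, ← add_smul]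
  refine Finset.sum_congr rfl fun r _ => ?_
  congr 1
  simp only [commShS]
  ring

lemma integrable_haar2_mul (q r : (ℤ × ℤ) × (ℤ × ℤ)) :
    Integrable fun p : ℝ × ℝ => (haar2 q p : ℂ) * (haar2 r p : ℂ) := by
  have h := ((isStep_haar q.1.1 q.1.2).mul (isStep_haar r.1.1 r.1.2)).integrable.mul_prod
    ((isStep_haar q.2.1 q.2.2).mul (isStep_haar r.2.1 r.2.2)).integrable
  refine h.congr (ae_of_all _ fun p => ?_)
  simp only [haar2]
  push_cast
  ring

lemma integral_haar2_mul (q r : (ℤ × ℤ) × (ℤ × ℤ)) :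
    ∫ p : ℝ × ℝ, (haar2 q p : ℂ) * (haar2 r p : ℂ) = if q = r then 1 else 0 := by
  have h := integral_prod_mul (μ := (volume : Measure ℝ)) (ν := (volume : Measure ℝ))
    (fun x => (haar q.1.1 q.1.2 x : ℂ) * (haar r.1.1 r.1.2 x : ℂ))
    (fun y => (haar q.2.1 q.2.2 y : ℂ) * (haar r.2.1 r.2.2 y : ℂ))
  rw [integral_haar_mul_haar, integral_haar_mul_haar, ← Measure.volume_eq_prod] at h
  have e : (if q = r then (1 : ℂ) else 0) =
      (if q.1 = r.1 then 1 else 0) * (if q.2 = r.2 then 1 else 0) := by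
    simp only [Prod.ext_iff (x := q), ite_and, ite_mul, one_mul, zero_mul]
  rw [e, ← h]
  congr 1
  funext p
  simp only [haar2]
  push_cast
  ring

lemma integral_sum_haar2 (s : Finset ((ℤ × ℤ) × (ℤ × ℤ))) (a : ((ℤ × ℤ) × (ℤ × ℤ)) → ℂ)
    (r : (ℤ × ℤ) × (ℤ × ℤ)) :
    ∫ p : ℝ × ℝ, (∑ q ∈ s, (haar2 q p : ℂ) * a q) * (haar2 r p : ℂ) =
      if r ∈ s then a r else 0 := by
  have e : ∀ p : ℝ × ℝ, (∑ q ∈ s, (haar2 q p : ℂ) * a q) * (haar2 r p : ℂ) =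
      ∑ q ∈ s, a q * ((haar2 q p : ℂ) * (haar2 r p : ℂ)) := fun p => by
    rw [Finset.sum_mul]
    exact Finset.sum_congr rfl fun q _ => by ring
  simp_rw [e]
  rw [integral_finsetSum _ fun q _ => (integrable_haar2_mul q r).const_mul _]
  simp_rw [integral_const_mul, integral_haar2_mul]
  simp

lemma hatM_sum {d : ℕ} (s : Finset ((ℤ × ℤ) × (ℤ × ℤ)))
    (A : ((ℤ × ℤ) × (ℤ × ℤ)) → Matrix (Fin d) (Fin d) ℂ) (r : (ℤ × ℤ) × (ℤ × ℤ)) :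
    hatM d (fun p => ∑ q ∈ s, (haar2 q p : ℂ) • A q) r = if r ∈ s then A r else 0 := by
  ext i l
  simp only [hatM, Matrix.of_apply, Matrix.sum_apply, Matrix.smul_apply, smul_eq_mul]
  rw [integral_sum_haar2 s (fun q => A q i l)]
  split_ifs <;> rfl

lemma hatV_sum {d : ℕ} (t : Finset ((ℤ × ℤ) × (ℤ × ℤ)))
    (v : ((ℤ × ℤ) × (ℤ × ℤ)) → Fin d → ℂ) (r : (ℤ × ℤ) × (ℤ × ℤ)) :
    hatV d (fun p => ∑ q ∈ t, (haar2 q p : ℂ) • v q) r = if r ∈ t then v r else 0 := by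
  ext i
  simp only [hatV, Finset.sum_apply, Pi.smul_apply, smul_eq_mul]
  rw [integral_sum_haar2 t (fun q => v q i)]
  split_ifs <;> rfl

/-- For `B` a finite linear combination of functions `A · h_{I×J}` (`A` a `d × d` matrix) and
`f` a finite linear combination of functions `v · h_{K×L}` (`v ∈ ℂ^d`), the iterated
commutator expands as
`[[M_B, Ш₁], Ш₂] f = Σ_{I,J,K,L} B̂(I×J) f̂(K×L) ([M_{h_I},Ш] h_K) ⊗ ([M_{h_J},Ш] h_L)`,
and every summand with `¬ I ⊆ K` or `¬ J ⊆ L` vanishes identically. -/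
theorem commutator_haar_expansion (d : ℕ)
    (s t : Finset ((ℤ × ℤ) × (ℤ × ℤ)))
    (A : ((ℤ × ℤ) × (ℤ × ℤ)) → Matrix (Fin d) (Fin d) ℂ)
    (v : ((ℤ × ℤ) × (ℤ × ℤ)) → Fin d → ℂ)
    (B : ℝ × ℝ → Matrix (Fin d) (Fin d) ℂ) (f : ℝ × ℝ → Fin d → ℂ)
    (hB : B = fun p => ∑ q ∈ s, (haar2 q p : ℂ) • A q)
    (hf : f = fun p => ∑ q ∈ t, (haar2 q p : ℂ) • v q) :
    (commSh d B f =ᵐ[volume] fun p =>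
        ∑' r : ((ℤ × ℤ) × (ℤ × ℤ)) × ((ℤ × ℤ) × (ℤ × ℤ)),
          (commShS (fun x => (haar r.1.1.1 r.1.1.2 x : ℂ))
                (fun x => (haar r.2.1.1 r.2.1.2 x : ℂ)) p.1 *
              commShS (fun x => (haar r.1.2.1 r.1.2.2 x : ℂ))
                (fun x => (haar r.2.2.1 r.2.2.2 x : ℂ)) p.2) •
            (hatM d B r.1).mulVec (hatV d f r.2)) ∧
    ∀ r : ((ℤ × ℤ) × (ℤ × ℤ)) × ((ℤ × ℤ) × (ℤ × ℤ)),
      (¬ dyadicI r.1.1.1 r.1.1.2 ⊆ dyadicI r.2.1.1 r.2.1.2 ∨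
          ¬ dyadicI r.1.2.1 r.1.2.2 ⊆ dyadicI r.2.2.1 r.2.2.2) →
        ∀ p : ℝ × ℝ,
          (commShS (fun x => (haar r.1.1.1 r.1.1.2 x : ℂ))
                (fun x => (haar r.2.1.1 r.2.1.2 x : ℂ)) p.1 *
              commShS (fun x => (haar r.1.2.1 r.1.2.2 x : ℂ))
                (fun x => (haar r.2.2.1 r.2.2.2 x : ℂ)) p.2) •
            (hatM d B r.1).mulVec (hatV d f r.2) = 0 := by
  subst hB hf
  constructor
  · refine ae_of_all _ fun p => ?_
    rw [commSh_eq_sum, tensorSum]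
    beta_reduce
    -- By orthonormality the series over all `(I, J, K, L)` is supported on the finite set `s × t`.
    rw [tsum_eq_sum (s := s ×ˢ t)]
    · refine Finset.sum_congr rfl fun r hr => ?_
      rw [Finset.mem_product] at hr
      rw [hatM_sum, hatV_sum, if_pos hr.1, if_pos hr.2]
    · intro r hr
      rw [Finset.mem_product, not_and_or] at hr
      rw [hatM_sum, hatV_sum]
      rcases hr with hr | hr <;> simp [hr]
  · rintro r (h | h) p
    · rw [commShS_haar_eq_zero h]; simp
    · rw [commShS_haar_eq_zero h]; simp
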